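/- arXiv:2202.11078 — 3 statements merged into one kernel-verified Lean document; each statement's English description precedes it below -/
import Mathlib

section
/- Let a : ℝ × ℝ^d → ℝ^d be continuous with ‖a(t,z) − a(t,z')‖ ≤ L ‖z − z'‖ for all t ∈ [0,T] and z, z' ∈ ℝ^d, and let Φ : [0,T] × ℝ^d → ℝ^d satisfy Φ_0(z) = z and ∂_t Φ_t(z) = a(t, Φ_t(z)) for all z and t ∈ [0,T]. Let Q ⊆ ℝ^d be nonempty and Z ⊆ Q be nonempty with fill distance h := sup_{z ∈ Q} inf_{s ∈ Z} ‖z − s‖. Then for every t ∈ [0,T] the fill distance of the transported particle set Φ_t(Z) in the transported domain Φ_t(Q) satisfies sup_{y ∈ Φ_t(Q)} inf_{s ∈ Φ_t(Z)} ‖y − s‖ ≤ e^{L t} · h. -/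
open Set
open scoped ENNReal

open Metric
open scoped NNReal

/-! The time-`t` flow map is Lipschitz with constant `exp (L t)` by Grönwall's inequality, and a
`K`-Lipschitz map multiplies every distance to the particle set, hence the fill distance, by at
most `K`. -/

section FillDistance

variable {α β : Type*} [PseudoEMetricSpace α] [PseudoEMetricSpace β]

/-- The fill distance `h_{Z,Q} = sup_{z ∈ Q} inf_{s ∈ Z} d(z, s)` of the sample points `Z` in the
domain `Q`, measuring how well `Z` resolves `Q`. It takes values in `[0, ∞]`, so that it is
meaningful for unbounded `Q`. -/
noncomputable def fillDistance (Z Q : Set α) : ℝ≥0∞ :=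
  ⨆ z ∈ Q, infEDist z Z

theorem infEDist_le_fillDistance {Z Q : Set α} {z : α} (hz : z ∈ Q) :
    infEDist z Z ≤ fillDistance Z Q :=
  le_iSup₂ (f := fun z _ => infEDist z Z) z hz

theorem infEDist_image_le_of_lipschitzOnWith {K : ℝ≥0} {f : α → β} {D Z : Set α} {z : α}
    (hf : LipschitzOnWith K f D) (hZD : Z ⊆ D) (hz : z ∈ D) (hZ : K = 0 → Z.Nonempty) :
    infEDist (f z) (f '' Z) ≤ K * infEDist z Z := by
  have mul_infEDist : K * infEDist z Z = ⨅ s : Z, K * edist z s := by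
    rw [infEDist, iInf_subtype',
      ENNReal.mul_iInf' (by simp) fun hK => (hZ (mod_cast hK)).to_subtype]
  rw [mul_infEDist]
  exact le_iInf fun s =>
    (infEDist_le_edist_of_mem (mem_image_of_mem f s.2)).trans (hf hz (hZD s.2))

theorem fillDistance_image_le_of_lipschitzOnWith {K : ℝ≥0} {f : α → β} {Z Q : Set α}
    (hf : LipschitzOnWith K f (Z ∪ Q)) (hZ : K = 0 → Z.Nonempty) :
    fillDistance (f '' Z) (f '' Q) ≤ K * fillDistance Z Q := by
  refine iSup₂_le (forall_mem_image.2 fun z hz => ?_)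
  calc
    infEDist (f z) (f '' Z) ≤ K * infEDist z Z :=
      infEDist_image_le_of_lipschitzOnWith hf subset_union_left (.inr hz) hZ
    _ ≤ K * fillDistance Z Q := by gcongr; exact infEDist_le_fillDistance hz

end FillDistance

section Flow

variable {E : Type*} [NormedAddCommGroup E] [NormedSpace ℝ E]
  {v : ℝ → E → E} {Φ : ℝ → E → E} {K : ℝ≥0} {T t : ℝ}

theorem lipschitzOnWith_flow {D : Set E} {t₀ : ℝ}
    (hv : ∀ t ∈ Ico t₀ T, LipschitzOnWith K (v t) (Φ t '' D))
    (hΦ₀ : ∀ z ∈ D, Φ t₀ z = z)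
    (hΦ : ∀ z ∈ D, IsIntegralCurveOn (fun t => Φ t z) v (Icc t₀ T)) (ht : t ∈ Icc t₀ T) :
    LipschitzOnWith (Real.exp (K * (t - t₀))).toNNReal (Φ t) D := by
  have hasDeriv_right : ∀ z ∈ D, ∀ s ∈ Ico t₀ T,
      HasDerivWithinAt (fun t => Φ t z) (v s (Φ s z)) (Ici s) s := fun z hz s hs =>
    (hΦ z hz s (Ico_subset_Icc_self hs)).mono_of_mem_nhdsWithin (Icc_mem_nhdsGE_of_mem hs)
  refine LipschitzOnWith.of_dist_le_mul fun z hz z' hz' => ?_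
  rw [Real.coe_toNNReal _ (Real.exp_pos _).le, mul_comm]
  exact dist_le_of_trajectories_ODE_of_mem hv
    (hΦ z hz).continuousOn (hasDeriv_right z hz) (fun s _ => mem_image_of_mem (Φ s) hz)
    (hΦ z' hz').continuousOn (hasDeriv_right z' hz') (fun s _ => mem_image_of_mem (Φ s) hz')
    (by rw [hΦ₀ z hz, hΦ₀ z' hz']) t ht

theorem fill_distance_transported_particles_general {Z Q : Set E}
    (hv : ∀ t ∈ Ico 0 T, LipschitzOnWith K (v t) (Φ t '' (Z ∪ Q)))
    (hΦ₀ : ∀ z ∈ Z ∪ Q, Φ 0 z = z)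
    (hΦ : ∀ z ∈ Z ∪ Q, IsIntegralCurveOn (fun t => Φ t z) v (Icc 0 T)) (ht : t ∈ Icc 0 T) :
    fillDistance (Φ t '' Z) (Φ t '' Q) ≤
      ENNReal.ofReal (Real.exp (K * t)) * fillDistance Z Q := by
  have flow_lipschitz := lipschitzOnWith_flow hv hΦ₀ hΦ ht
  rw [sub_zero] at flow_lipschitz
  exact fillDistance_image_le_of_lipschitzOnWith flow_lipschitz fun hK =>
    absurd hK (Real.toNNReal_pos.2 (Real.exp_pos _)).ne'

end Flow

/-- **fill distance of the transported particle set.** Let `a` be a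
continuous velocity field on `ℝ^d`, `L`-Lipschitz in the spatial variable for
`t ∈ [0,T]`, and let `Φ` be its flow map (`Φ 0 z = z`, `∂ₜ Φ t z = a (t, Φ t z)`).
For a nonempty particle set `Z` inside a nonempty domain `Q` with fill distance
`h = sup_{z ∈ Q} inf_{s ∈ Z} ‖z − s‖`, the fill distance of the transported particle
set `Φ t '' Z` in the transported domain `Φ t '' Q` is at most `exp (L t) ⬝ h`,
for every `t ∈ [0,T]`.  (Distances are measured by `edist y s = ‖y − s‖`.) -/
theorem fill_distance_transported_particles
    {d : ℕ} (T : ℝ)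
    (a : ℝ × EuclideanSpace ℝ (Fin d) → EuclideanSpace ℝ (Fin d))
    (ha : Continuous a)
    (L : ℝ) (hL : 0 ≤ L)
    (hlip : ∀ t ∈ Icc (0 : ℝ) T, ∀ z z' : EuclideanSpace ℝ (Fin d),
      ‖a (t, z) - a (t, z')‖ ≤ L * ‖z - z'‖)
    (Φ : ℝ → EuclideanSpace ℝ (Fin d) → EuclideanSpace ℝ (Fin d))
    (hΦ0 : ∀ z, Φ 0 z = z)
    (hΦode : ∀ (z : EuclideanSpace ℝ (Fin d)), ∀ t ∈ Icc (0 : ℝ) T,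
      HasDerivAt (fun s => Φ s z) (a (t, Φ t z)) t)
    (Q Z : Set (EuclideanSpace ℝ (Fin d)))
    (hQ : Q.Nonempty) (hZ : Z.Nonempty) (hZQ : Z ⊆ Q) :
    ∀ t ∈ Icc (0 : ℝ) T,
      (⨆ y ∈ Φ t '' Q, ⨅ s ∈ Φ t '' Z, edist y s) ≤
        ENNReal.ofReal (Real.exp (L * t)) * ⨆ z ∈ Q, ⨅ s ∈ Z, edist z s := by
  lift L to ℝ≥0 using hL
  exact fun t ht => fill_distance_transported_particles_general (v := fun t z => a (t, z))
    (fun s hs => lipschitzOnWith_iff_norm_sub_le.2 fun z _ z' _ =>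
      hlip s (Ico_subset_Icc_self hs) z z')
    (fun z _ => hΦ0 z) (fun z _ s hs => (hΦode z s hs).hasDerivWithinAt) ht
end

section
/- Let X and Y be sets and let k₁ : X × X → ℝ and k₂ : Y × Y → ℝ be symmetric kernels that are strictly positive definite, i.e., for every N, every family of pairwise distinct points and every nonzero c ∈ ℝ^N the corresponding kernel matrix (k₁(x_i, x_j))_{ij} (respectively (k₂(v_i, v_j))_{ij}) has Σ_{i,j} c_i c_j k(·_i, ·_j) > 0. Define the tensorised kernel k : (X × Y) × (X × Y) → ℝ by k((x,v), (x̃,ṽ)) := k₁(x, x̃) · k₂(v, ṽ). Then k is strictly positive definite on X × Y: for every N, all pairwise distinct pairs (x₁,v₁), …, (x_N,v_N) ∈ X × Y, and every nonzero c ∈ ℝ^N, one has Σ_{i,j} c_i c_j k₁(x_i, x_j) k₂(v_i, v_j) > 0. -/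
open Finset

/-!
A strictly positive definite kernel on `X` is treated as a positive definite matrix indexed by `X`;
for infinite `X`, `Matrix.PosDef` tests against finitely supported vectors.

Distinct pairs may share a coordinate, and then the `N × N` matrices `k₁ (x i) (x j)` and
`k₂ (v i) (v j)` can be singular. So restrict `k₁` and `k₂` to the finite sets of first and second
coordinates that occur: the Kronecker product of these two positive definite matrices is positive
definite, and the kernel matrix of the pairs is a principal submatrix of it.
-/

section PosDef

open Matrix

variable {R n : Type*}

lemma posDef_iff_forall_finset_submatrix [Ring R] [PartialOrder R] [StarRing R]
    {M : Matrix n n R} :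
    M.PosDef ↔ ∀ s : Finset n, (M.submatrix (↑) (↑) : Matrix s s R).PosDef := by
  classical
  refine ⟨fun h s ↦ h.submatrix Subtype.val_injective, fun h ↦ ⟨?_, fun c hc ↦ ?_⟩⟩
  · refine IsHermitian.ext fun i j ↦ ?_
    exact (h {i, j}).isHermitian.apply ⟨i, by simp⟩ ⟨j, by simp⟩
  · have hc' : (fun i : c.support ↦ c i) ≠ 0 := by
      obtain ⟨i, hi⟩ := Finsupp.support_nonempty_iff.mpr hc
      exact fun h0 ↦ Finsupp.mem_support_iff.mp hi (congrFun h0 ⟨i, hi⟩)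
    have hpos := (h c.support).dotProduct_mulVec_pos hc'
    simpa only [Finsupp.sum, dotProduct, mulVec, mul_sum, mul_assoc, Pi.star_apply,
      submatrix_apply, ← sum_coe_sort c.support] using hpos

lemma matrix_of_posDef_iff_forall_fin_injective
    [CommRing R] [PartialOrder R] [StarRing R] [TrivialStar R] {k : n → n → R} :
    (of k).PosDef ↔ (∀ x y, k x y = k y x) ∧
      ∀ (N : ℕ) (x : Fin N → n), Function.Injective x →
        ∀ c : Fin N → R, c ≠ 0 → 0 < ∑ i, ∑ j, c i * c j * k (x i) (x j) := by
  have quadForm_eq {N : ℕ} (x : Fin N → n) (c : Fin N → R) :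
      star c ⬝ᵥ (of k).submatrix x x *ᵥ c = ∑ i, ∑ j, c i * c j * k (x i) (x j) := by
    simp only [dotProduct, mulVec, mul_sum, star_trivial, submatrix_apply, of_apply,
      mul_assoc, mul_comm (k _ _)]
  constructor
  · intro h
    refine ⟨fun x y ↦ by simpa using h.isHermitian.apply y x, fun N x hx c hc ↦ ?_⟩
    exact quadForm_eq x c ▸ (h.submatrix hx).dotProduct_mulVec_pos hc
  · rintro ⟨hsymm, hpos⟩
    have hherm : (of k).IsHermitian := IsHermitian.ext fun x y ↦ by simp [hsymm y x]
    have posDef_fin (N : ℕ) (x : Fin N → n) (hx : Function.Injective x) :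
        ((of k).submatrix x x).PosDef :=
      .of_dotProduct_mulVec_pos (hherm.submatrix x) fun c hc ↦ quadForm_eq x c ▸ hpos N x hx c hc
    refine posDef_iff_forall_finset_submatrix.mpr fun s ↦ ?_
    have hs := posDef_fin #s (fun i ↦ s.equivFin.symm i)
      (Subtype.val_injective.comp s.equivFin.symm.injective)
    simpa [Function.comp_def] using hs.submatrix s.equivFin.injective

open scoped Kronecker ComplexOrder in
theorem tensorised_kernel_strictly_posdef_general {𝕜 X Y : Type*} [RCLike 𝕜]
    {K₁ : Matrix X X 𝕜} {K₂ : Matrix Y Y 𝕜} (hK₁ : K₁.PosDef) (hK₂ : K₂.PosDef) :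
    (K₁ ⊗ₖ K₂).PosDef := by
  classical
  refine posDef_iff_forall_finset_submatrix.mpr fun s ↦ ?_
  let coords (p : s) : s.image Prod.fst × s.image Prod.snd :=
    (⟨p.1.1, mem_image_of_mem _ p.2⟩, ⟨p.1.2, mem_image_of_mem _ p.2⟩)
  have coords_injective : Function.Injective coords := fun p q h ↦
    Subtype.ext <| Prod.ext (congrArg (·.1.1) h) (congrArg (·.2.1) h)
  have hgrid := (posDef_iff_forall_finset_submatrix.mp hK₁ (s.image Prod.fst)).kronecker
    (posDef_iff_forall_finset_submatrix.mp hK₂ (s.image Prod.snd))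
  exact hgrid.submatrix coords_injective

end PosDef

/-- **tensorised kernels are strictly positive definite.** If `k₁` and
`k₂` are symmetric, strictly positive definite kernels on `X` and `Y` respectively,
then the tensorised kernel `k ((x,v), (x̃,ṽ)) = k₁ x x̃ * k₂ v ṽ` is strictly positive
definite on `X × Y`: for all pairwise distinct pairs `(x i, v i)` and every nonzero
`c`, one has `∑ i ∑ j, c i * c j * k₁ (x i) (x j) * k₂ (v i) (v j) > 0`. -/
theorem tensorised_kernel_strictly_posdef
    {X Y : Type*} (k₁ : X → X → ℝ) (k₂ : Y → Y → ℝ)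
    (hk₁symm : ∀ x x', k₁ x x' = k₁ x' x)
    (hk₂symm : ∀ v v', k₂ v v' = k₂ v' v)
    (hk₁ : ∀ (N : ℕ) (x : Fin N → X), Function.Injective x →
      ∀ c : Fin N → ℝ, c ≠ 0 → 0 < ∑ i, ∑ j, c i * c j * k₁ (x i) (x j))
    (hk₂ : ∀ (N : ℕ) (v : Fin N → Y), Function.Injective v →
      ∀ c : Fin N → ℝ, c ≠ 0 → 0 < ∑ i, ∑ j, c i * c j * k₂ (v i) (v j)) :
    ∀ (N : ℕ) (p : Fin N → X × Y), Function.Injective p →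
      ∀ c : Fin N → ℝ, c ≠ 0 →
        0 < ∑ i, ∑ j, c i * c j * k₁ (p i).1 (p j).1 * k₂ (p i).2 (p j).2 := by
  have hk : (Matrix.of fun p q : X × Y ↦ k₁ p.1 q.1 * k₂ p.2 q.2).PosDef :=
    tensorised_kernel_strictly_posdef_general
      (matrix_of_posDef_iff_forall_fin_injective.mpr ⟨hk₁symm, hk₁⟩)
      (matrix_of_posDef_iff_forall_fin_injective.mpr ⟨hk₂symm, hk₂⟩)
  simpa only [mul_assoc] using (matrix_of_posDef_iff_forall_fin_injective.mp hk).2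
end

section
/- Define b : ℝ → ℝ by b(r) = (max(1 − |r|, 0))⁴ · (4|r| + 1) (the Wendland function φ_{3,1}). Then b is strictly positive definite as a kernel on ℝ: for every N, every family of pairwise distinct points x₁, …, x_N ∈ ℝ, and every nonzero c ∈ ℝ^N, Σ_{i,j} c_i c_j b(x_i − x_j) > 0; in particular the kernel matrix (b(x_i − x_j))_{ij} is symmetric positive definite. -/
open Finset

/-- The Wendland function `φ_{3,1}(r) = (1 − |r|)₊⁴ (4|r| + 1)`. -/
noncomputable def wendland31 (r : ℝ) : ℝ := (max (1 - |r|) 0) ^ 4 * (4 * |r| + 1)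

/-!
The autocorrelation of a square-integrable function is positive definite, because its quadratic
forms are integrals of squares. The parabola `v (1 - v)` on `[0, 1]` has
autocorrelation `q / 30` with `q(t) = (1 - |t|)₊³ (1 + 3 |t| + t²)`, and the identity
`d/ds [s⁴ φ_{3,1}(r / s)] = 4 s³ q(r / s)` exhibits `φ_{3,1}(r)` as the mixture
`∫₀¹ 4 s³ q(r / s) ds`. The mixture is strictly positive definite because `q` has compact support:
for small `s` the kernel matrix of `q(· / s)` at distinct points is the identity.
-/

open Filter MeasureTheory Topology

/-- A real function `φ` on a group is positive definite when all its kernel matrices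
`(φ (x i - x j)) i j` have a nonnegative quadratic form. Evenness of `φ` is not part of the
definition. -/
def IsPosDefFun {G : Type*} [Sub G] (φ : G → ℝ) : Prop :=
  ∀ (N : ℕ) (x : Fin N → G) (c : Fin N → ℝ), 0 ≤ ∑ i, ∑ j, c i * c j * φ (x i - x j)

/-- Strict positive definiteness: the quadratic form of the kernel matrix `(φ (x i - x j)) i j` is
positive away from `0` as soon as the points are pairwise distinct. As in `IsPosDefFun`, evenness
of `φ` is not part of the definition. -/
def IsStrictPosDefFun {G : Type*} [Sub G] (φ : G → ℝ) : Prop :=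
  ∀ (N : ℕ) (x : Fin N → G), Function.Injective x → ∀ c : Fin N → ℝ, c ≠ 0 →
    0 < ∑ i, ∑ j, c i * c j * φ (x i - x j)

section QuadraticForm

variable {ι : Type*} [Fintype ι] (c : ι → ℝ)

section Integral

variable {α : Type*} [MeasurableSpace α] {μ : Measure α} {K : ι → ι → α → ℝ}

lemma integrable_sum_sum_mul (hK : ∀ i j, Integrable (K i j) μ) :
    Integrable (fun a => ∑ i, ∑ j, c i * c j * K i j a) μ :=
  integrable_finsetSum _ fun i _ => integrable_finsetSum _ fun j _ => (hK i j).const_mul _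

lemma integral_sum_sum_mul (hK : ∀ i j, Integrable (K i j) μ) :
    ∫ a, ∑ i, ∑ j, c i * c j * K i j a ∂μ = ∑ i, ∑ j, c i * c j * ∫ a, K i j a ∂μ := by
  have hcK : ∀ i j, Integrable (fun a => c i * c j * K i j a) μ := fun i j => (hK i j).const_mul _
  simp_rw [integral_finsetSum _ fun i _ => integrable_finsetSum _ fun j _ => hcK i j,
    integral_finsetSum _ fun j _ => hcK _ j, integral_const_mul]

end Integral

lemma sum_sum_mul_of_offDiag_eq_zero {K : ι → ι → ℝ} (hK : ∀ i j, i ≠ j → K i j = 0) :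
    ∑ i, ∑ j, c i * c j * K i j = ∑ i, c i ^ 2 * K i i := by
  refine Finset.sum_congr rfl fun i _ => ?_
  rw [Finset.sum_eq_single i (fun j _ hj => by rw [hK i j hj.symm, mul_zero]) (by simp), sq]

end QuadraticForm

section Autocorrelation

variable {G : Type*} [AddGroup G] [MeasurableSpace G] {μ : Measure G} {f : G → ℝ}

/-- The autocorrelation `t ↦ ∫ f(u) f(u + t) dμ(u)` of a real function, whose kernel matrices are
Gram matrices of translates of `f`. -/
noncomputable def autocorrelation (μ : Measure G) (f : G → ℝ) (t : G) : ℝ :=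
  ∫ u, f u * f (u + t) ∂μ

variable [MeasurableAdd G] [μ.IsAddRightInvariant]

lemma autocorrelation_sub (x y : G) :
    autocorrelation μ f (x - y) = ∫ u, f (u - x) * f (u - y) ∂μ := by
  rw [autocorrelation, ← integral_sub_right_eq_self _ x]
  simp only [sub_add_sub_cancel]

lemma autocorrelation_even : Function.Even (autocorrelation μ f) := fun t => by
  rw [← zero_sub, autocorrelation_sub]
  simp only [sub_zero, autocorrelation]
  rw [← integral_add_right_eq_self _ t]
  simp only [add_sub_cancel_right, mul_comm]

lemma isPosDefFun_autocorrelation (hf : MemLp f 2 μ) : IsPosDefFun (autocorrelation μ f) := by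
  intro N x c
  have hL2 : ∀ i, MemLp (fun u => f (u - x i)) 2 μ := fun i =>
    hf.comp_measurePreserving (measurePreserving_sub_right μ (x i))
  calc 0 ≤ ∫ u, (∑ i, c i * f (u - x i)) ^ 2 ∂μ := integral_nonneg fun _ => sq_nonneg _
    _ = ∫ u, ∑ i, ∑ j, c i * c j * (f (u - x i) * f (u - x j)) ∂μ := by
      simp only [sq, Finset.sum_mul_sum, mul_mul_mul_comm]
    _ = ∑ i, ∑ j, c i * c j * autocorrelation μ f (x i - x j) := by
      simp only [autocorrelation_sub]
      exact integral_sum_sum_mul c fun i j => (hL2 i).integrable_mul (hL2 j)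

end Autocorrelation

section ScaleMixture

lemma intervalIntegral_pos_of_eventually_pos {F : ℝ → ℝ} {a b : ℝ} (hab : a < b)
    (hF : IntervalIntegrable F volume a b) (hnonneg : ∀ s ∈ Set.Ioc a b, 0 ≤ F s)
    (hpos : ∀ᶠ s in 𝓝[>] a, 0 < F s) : 0 < ∫ s in a..b, F s := by
  obtain ⟨d, ⟨had, hdb⟩, hd⟩ := (mem_nhdsGT_iff_exists_mem_Ioc_Ioo_subset hab).mp hpos
  have hF_left : IntervalIntegrable F volume a d :=
    hF.mono_set (Set.uIcc_subset_uIcc_left (Set.mem_uIcc_of_le had.le hdb))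
  have hF_right : IntervalIntegrable F volume d b :=
    hF.mono_set (Set.uIcc_subset_uIcc_right (Set.mem_uIcc_of_le had.le hdb))
  rw [← intervalIntegral.integral_add_adjacent_intervals hF_left hF_right]
  exact add_pos_of_pos_of_nonneg
    (intervalIntegral.intervalIntegral_pos_of_pos_on hF_left hd had)
    (intervalIntegral.integral_nonneg hdb fun s hs => hnonneg s ⟨had.trans_le hs.1, hs.2⟩)

variable {E : Type*} [NormedAddCommGroup E] [NormedSpace ℝ E] {q : E → ℝ} {w : ℝ → ℝ} {a b : ℝ}

/-- The mixture `t ↦ ∫ w(s) q(t / s) ds` over `0 < s < a` of the rescalings of `q`, with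
density `w`. -/
noncomputable def scaleMixture (a : ℝ) (w : ℝ → ℝ) (q : E → ℝ) (t : E) : ℝ :=
  ∫ s in 0..a, w s * q (s⁻¹ • t)

lemma tendsto_inv_smul_cobounded {t : E} (ht : t ≠ 0) :
    Tendsto (fun s : ℝ => s⁻¹ • t) (𝓝[>] 0) (Bornology.cobounded E) := by
  rw [← tendsto_norm_atTop_iff_cobounded]
  simp only [norm_smul]
  exact (tendsto_norm_atTop_atTop.comp tendsto_inv_nhdsGT_zero).atTop_mul_const
    (norm_pos_iff.mpr ht)

lemma eventually_apply_inv_smul_eq_zero (hq : HasCompactSupport q) {t : E} (ht : t ≠ 0) :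
    ∀ᶠ s : ℝ in 𝓝[>] 0, q (s⁻¹ • t) = 0 := by
  rw [hasCompactSupport_iff_eventuallyEq, coclosedCompact_eq_cocompact] at hq
  exact (tendsto_inv_smul_cobounded ht).eventually (Metric.cobounded_le_cocompact hq)

lemma intervalIntegrable_mul_apply_inv_smul (hq : Continuous q) (hq_supp : HasCompactSupport q)
    (hw : IntervalIntegrable w volume a b) (t : E) :
    IntervalIntegrable (fun s => w s * q (s⁻¹ • t)) volume a b := by
  obtain ⟨C, hC⟩ := hq_supp.exists_bound_of_continuous hq
  have hmeas : StronglyMeasurable fun s : ℝ => q (s⁻¹ • t) :=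
    hq.comp_stronglyMeasurable (measurable_inv.stronglyMeasurable.smul_const t)
  rw [intervalIntegrable_iff] at hw ⊢
  exact hw.mul_bdd hmeas.aestronglyMeasurable (ae_of_all _ fun s => hC (s⁻¹ • t))

theorem isStrictPosDefFun_scaleMixture (hq : Continuous q) (hq_supp : HasCompactSupport q)
    (hq_posDef : IsPosDefFun q) (hq_zero : 0 < q 0) (ha : 0 < a)
    (hw : IntervalIntegrable w volume 0 a) (hw_pos : ∀ s ∈ Set.Ioc 0 a, 0 < w s) :
    IsStrictPosDefFun (scaleMixture a w q) := by
  intro N x hx c hc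
  have hint : ∀ i j, IntervalIntegrable (fun s => w s * q (s⁻¹ • (x i - x j))) volume 0 a :=
    fun i j => intervalIntegrable_mul_apply_inv_smul hq hq_supp hw _
  have hmix : ∑ i, ∑ j, c i * c j * scaleMixture a w q (x i - x j) =
      ∫ s in 0..a, ∑ i, ∑ j, c i * c j * (w s * q (s⁻¹ • (x i - x j))) := by
    simp only [scaleMixture, intervalIntegral.integral_of_le ha.le]
    exact (integral_sum_sum_mul c fun i j => (hint i j).1).symm
  have hfactor : ∀ s, ∑ i, ∑ j, c i * c j * (w s * q (s⁻¹ • (x i - x j))) =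
      w s * ∑ i, ∑ j, c i * c j * q (s⁻¹ • (x i - x j)) := fun s => by
    simp only [Finset.mul_sum, mul_left_comm]
  rw [hmix]
  refine intervalIntegral_pos_of_eventually_pos ha ?_ (fun s hs => ?_) ?_
  · exact (intervalIntegrable_iff_integrableOn_Ioc_of_le ha.le).mpr
      (integrable_sum_sum_mul c fun i j => (hint i j).1)
  · rw [hfactor]
    simp only [smul_sub]
    exact mul_nonneg (hw_pos s hs).le (hq_posDef N (fun i => s⁻¹ • x i) c)
  · have hseparated : ∀ᶠ s : ℝ in 𝓝[>] 0, ∀ i j, i ≠ j → q (s⁻¹ • (x i - x j)) = 0 :=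
      eventually_all.mpr fun i => eventually_all.mpr fun j => eventually_imp_distrib_left.mpr
        fun hij => eventually_apply_inv_smul_eq_zero hq_supp (sub_ne_zero.mpr (hx.ne hij))
    obtain ⟨i, hi⟩ := Function.ne_iff.mp hc
    filter_upwards [hseparated, Ioc_mem_nhdsGT ha] with s hs hsa
    rw [hfactor, sum_sum_mul_of_offDiag_eq_zero c hs]
    simp only [sub_self, smul_zero]
    exact mul_pos (hw_pos s hsa) (Finset.sum_pos' (fun _ _ => by positivity)
      ⟨i, Finset.mem_univ i, mul_pos (sq_pos_of_ne_zero hi) hq_zero⟩)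

end ScaleMixture

section Wendland

/-- The parabola `v (1 - v)` on `[0, 1]`, extended by zero: the profile whose autocorrelation
generates `φ_{3,1}`. -/
noncomputable def parabolaBump (v : ℝ) : ℝ := max (v * (1 - v)) 0

lemma parabolaBump_of_mem {v : ℝ} (hv : v ∈ Set.Icc 0 1) : parabolaBump v = v * (1 - v) :=
  max_eq_left (mul_nonneg hv.1 (sub_nonneg.mpr hv.2))

lemma parabolaBump_of_notMem {v : ℝ} (hv : v ∉ Set.Icc 0 1) : parabolaBump v = 0 := by
  refine max_eq_right ?_
  rw [Set.mem_Icc, not_and_or, not_le, not_le] at hv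
  rcases hv with hv | hv <;> nlinarith

lemma memLp_parabolaBump (p : ENNReal) : MemLp parabolaBump p :=
  Continuous.memLp_of_hasCompactSupport (by unfold parabolaBump; fun_prop)
    (.intro isCompact_Icc fun _ => parabolaBump_of_notMem)

/-- The autocorrelation of `parabolaBump`, which is `q / 30` in the notation above; the rescalings
of it are mixed into `φ_{3,1}`. -/
noncomputable def parabolaCorr : ℝ → ℝ := autocorrelation volume parabolaBump

lemma parabolaCorr_eq_setIntegral {t : ℝ} (ht : 0 ≤ t) :
    parabolaCorr t = ∫ u in Set.Icc 0 (1 - t), u * (1 - u) * ((u + t) * (1 - (u + t))) := by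
  have hzero : ∀ u ∉ Set.Icc 0 (1 - t), parabolaBump u * parabolaBump (u + t) = 0 := by
    intro u hu
    rw [Set.mem_Icc, not_and_or, not_le, not_le] at hu
    rcases hu with hu | hu
    · rw [parabolaBump_of_notMem fun h => hu.not_ge h.1, zero_mul]
    · rw [parabolaBump_of_notMem (v := u + t) fun h => by linarith [h.2], mul_zero]
  rw [parabolaCorr, autocorrelation, ← setIntegral_eq_integral_of_forall_compl_eq_zero hzero]
  refine setIntegral_congr_fun measurableSet_Icc fun u hu => ?_
  have hu0 : 0 ≤ u := hu.1
  have hu1 : u + t ≤ 1 := by linarith [hu.2]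
  rw [parabolaBump_of_mem ⟨hu0, by linarith⟩, parabolaBump_of_mem ⟨by linarith, hu1⟩]

lemma parabolaCorr_of_nonneg {t : ℝ} (ht : 0 ≤ t) :
    parabolaCorr t = max (1 - t) 0 ^ 3 * (1 + 3 * t + t ^ 2) / 30 := by
  rw [parabolaCorr_eq_setIntegral ht]
  rcases le_total t 1 with ht1 | ht1
  · have hexpand : ∀ u : ℝ, u * (1 - u) * ((u + t) * (1 - (u + t))) =
        u * (t * (1 - t)) + u ^ 2 * (1 - 3 * t + t ^ 2) - u ^ 3 * (2 * (1 - t)) + u ^ 4 :=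
      fun u => by ring
    rw [integral_Icc_eq_integral_Ioc, ← intervalIntegral.integral_of_le (sub_nonneg.mpr ht1),
      max_eq_left (sub_nonneg.mpr ht1)]
    simp only [hexpand]
    rw [intervalIntegral.integral_add, intervalIntegral.integral_sub, intervalIntegral.integral_add]
    · simp only [intervalIntegral.integral_mul_const, integral_id, integral_pow]
      ring
    all_goals exact Continuous.intervalIntegrable (by fun_prop) _ _
  · rw [max_eq_right (sub_nonpos.mpr ht1), integral_Icc_eq_integral_Ioc,
      Set.Ioc_eq_empty (sub_nonpos.mpr ht1).not_gt]
    simp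

lemma parabolaCorr_eq (t : ℝ) :
    parabolaCorr t = max (1 - |t|) 0 ^ 3 * (1 + 3 * |t| + |t| ^ 2) / 30 := by
  rw [← parabolaCorr_of_nonneg (abs_nonneg t)]
  rcases abs_choice t with h | h <;> rw [h]
  exact (autocorrelation_even t).symm

lemma continuous_parabolaCorr : Continuous parabolaCorr := by
  rw [funext parabolaCorr_eq]
  fun_prop

lemma hasCompactSupport_parabolaCorr : HasCompactSupport parabolaCorr := by
  refine .intro (isCompact_closedBall (0 : ℝ) 1) fun t ht => ?_
  have ht1 : 1 < |t| := by simpa using ht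
  rw [parabolaCorr_eq, max_eq_right (by linarith)]
  simp

lemma mul_parabolaCorr_inv_smul {s : ℝ} (hs : 0 ≤ s) (r : ℝ) :
    120 * s ^ 3 * parabolaCorr (s⁻¹ • r) =
      4 * max (s - |r|) 0 ^ 3 * (s ^ 2 + 3 * |r| * s + |r| ^ 2) / s ^ 2 := by
  rcases hs.eq_or_lt with rfl | hs
  · simp
  have hmax : s * max (1 - s⁻¹ * |r|) 0 = max (s - |r|) 0 := by
    rw [mul_max_of_nonneg _ _ hs.le, mul_sub, mul_inv_cancel_left₀ hs.ne', mul_one, mul_zero]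
  rw [parabolaCorr_eq, smul_eq_mul, abs_mul, abs_of_pos (inv_pos.mpr hs), ← hmax]
  field_simp
  ring

lemma intervalIntegrable_mul_parabolaCorr_inv_smul (r a b : ℝ) :
    IntervalIntegrable (fun s => 120 * s ^ 3 * parabolaCorr (s⁻¹ • r)) volume a b :=
  intervalIntegrable_mul_apply_inv_smul continuous_parabolaCorr hasCompactSupport_parabolaCorr
    (Continuous.intervalIntegrable (by fun_prop) a b) r

lemma integral_mul_parabolaCorr_inv_smul_of_le_abs {r d : ℝ} (hd : 0 ≤ d) (hdr : d ≤ |r|) :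
    ∫ s in 0..d, 120 * s ^ 3 * parabolaCorr (s⁻¹ • r) = 0 := by
  refine intervalIntegral.integral_zero_ae (ae_of_all _ fun s hs => ?_)
  obtain ⟨hs0, hsd⟩ : s ∈ Set.Ioc 0 d := by rwa [Set.uIoc_of_le hd] at hs
  rw [mul_parabolaCorr_inv_smul hs0.le, max_eq_right (sub_nonpos.mpr (hsd.trans hdr))]
  simp

-- The primitive `(s - ρ) ^ 4 * (s + 4 * ρ) / s` is `s ^ 4 * wendland31 (ρ / s)` for `0 ≤ ρ ≤ s`.
lemma hasDerivAt_wendland31_primitive (ρ : ℝ) {s : ℝ} (hs : s ≠ 0) :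
    HasDerivAt (fun s => (s - ρ) ^ 4 * (s + 4 * ρ) / s)
      (4 * (s - ρ) ^ 3 * (s ^ 2 + 3 * ρ * s + ρ ^ 2) / s ^ 2) s := by
  have hnum := (((hasDerivAt_id s).sub_const ρ).pow 4).mul ((hasDerivAt_id s).add_const (4 * ρ))
  refine (hnum.div (hasDerivAt_id s) hs).congr_deriv ?_
  simp only [Nat.cast_ofNat, id_eq, Nat.add_one_sub_one, mul_one, Pi.pow_apply, Pi.mul_apply]
  ring

lemma integral_mul_parabolaCorr_inv_smul_of_abs_le {r b : ℝ} (hr : r ≠ 0) (hrb : |r| ≤ b) :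
    ∫ s in |r|..b, 120 * s ^ 3 * parabolaCorr (s⁻¹ • r) = (b - |r|) ^ 4 * (b + 4 * |r|) / b := by
  have hderiv : ∀ s ∈ Set.uIcc |r| b, HasDerivAt (fun s => (s - |r|) ^ 4 * (s + 4 * |r|) / s)
      (120 * s ^ 3 * parabolaCorr (s⁻¹ • r)) s := by
    intro s hs
    rw [Set.uIcc_of_le hrb] at hs
    have hs0 : 0 < s := (abs_pos.mpr hr).trans_le hs.1
    rw [mul_parabolaCorr_inv_smul hs0.le, max_eq_left (sub_nonneg.mpr hs.1)]
    exact hasDerivAt_wendland31_primitive |r| hs0.ne'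
  rw [intervalIntegral.integral_eq_sub_of_hasDerivAt hderiv
    (intervalIntegrable_mul_parabolaCorr_inv_smul r |r| b)]
  simp

lemma wendland31_eq_scaleMixture :
    wendland31 = scaleMixture 1 (fun s => 120 * s ^ 3) parabolaCorr := by
  funext r
  rw [scaleMixture, wendland31]
  rcases eq_or_ne r 0 with rfl | hr
  · norm_num [parabolaCorr_eq, integral_pow]
  rcases le_total 1 |r| with hr1 | hr1
  · rw [integral_mul_parabolaCorr_inv_smul_of_le_abs zero_le_one hr1,
      max_eq_right (sub_nonpos.mpr hr1)]
    simp
  · rw [← intervalIntegral.integral_add_adjacent_intervals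
        (intervalIntegrable_mul_parabolaCorr_inv_smul r 0 |r|)
        (intervalIntegrable_mul_parabolaCorr_inv_smul r |r| 1),
      integral_mul_parabolaCorr_inv_smul_of_le_abs (abs_nonneg r) le_rfl,
      integral_mul_parabolaCorr_inv_smul_of_abs_le hr hr1, max_eq_left (sub_nonneg.mpr hr1)]
    ring

lemma wendland31_even : Function.Even wendland31 := fun r => by
  simp only [wendland31, abs_neg]

theorem isStrictPosDefFun_wendland31 : IsStrictPosDefFun wendland31 := by
  rw [wendland31_eq_scaleMixture]
  refine isStrictPosDefFun_scaleMixture continuous_parabolaCorr hasCompactSupport_parabolaCorr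
    (isPosDefFun_autocorrelation (memLp_parabolaBump 2)) ?_ one_pos
    (Continuous.intervalIntegrable (by fun_prop) 0 1) fun s hs => ?_
  · norm_num [parabolaCorr_eq]
  · have := hs.1
    positivity

end Wendland

/-- **the Wendland function `φ_{3,1}` is strictly positive definite on
`ℝ`.** For every family of pairwise distinct points `x₁, …, x_N ∈ ℝ` and every
nonzero `c ∈ ℝ^N`, one has `∑ i ∑ j, c i * c j * b (x i − x j) > 0`, where
`b = wendland31`; in particular the kernel matrix `(b (x i − x j)) i j` is symmetric
positive definite. -/
theorem wendland31_strictly_posdef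
    (N : ℕ) (x : Fin N → ℝ) (hx : Function.Injective x) :
    (∀ i j, wendland31 (x i - x j) = wendland31 (x j - x i)) ∧
    (∀ c : Fin N → ℝ, c ≠ 0 →
      0 < ∑ i, ∑ j, c i * c j * wendland31 (x i - x j)) := by
  refine ⟨fun i j => ?_, isStrictPosDefFun_wendland31 N x hx⟩
  rw [← wendland31_even, neg_sub]
end
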